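/- Let I be a countably infinite subset of ℝ such that I + ℤ ⊆ I, and let I = ⋃_{p=1}^∞ W_p where (W_p)_p is an increasing sequence of finite subsets. Let (w_i)_{i∈I} be a family of positive real numbers with 0 < inf_{i∈I} w_i ≤ sup_{i∈I} w_i < ∞. Then the operator T : c₀(I) → c₀(I) defined by T[(x_i)_{i∈I}] = (w_i x_{i+1})_{i∈I} is frequently hypercyclic on c₀(I) if and only if there exist a sequence (M(p))_{p∈ℕ} of positive real numbers tending to ∞ and a sequence (E_p)_{p∈ℕ} of subsets of ℕ such that: (a) for any p ≥ 1, ldens(E_p) > 0; (b) for any distinct p, q ≥ 1, (E_p + W_p) ∩ (E_q + W_q) = ∅; (c) for all p ≥ 1 and s ∈ W_p, lim_{n→∞, n∈E_p} w_s w_{s+1} ⋯ w_{s+n-1} = ∞; (d) for any p, q ≥ 1, n ∈ E_p and m ∈ E_q with m ≠ n, and any t ∈ W_q, (w_{m-n+t} ⋯ w_{m+t-1}) / (w_t ⋯ w_{t+m-1}) ≤ 1/(M(p)M(q)). Moreover, these conditions hold for some sequence (M(p))_{p∈ℕ} tending to ∞ if and only if for every sequence (M(p))_{p∈ℕ} of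 positive reals tending to ∞ there exists a sequence (E_p)_{p∈ℕ} satisfying (a)–(d). -/

import Mathlib

/-!
Write `P s n = w s * w (s+1) * ⋯ * w (s+n-1)`, so that `(Tⁿ x) i = P i n * x (i + n)`.

*Necessity.* Let `x` be a frequently hypercyclic vector. Take as targets vectors `y p` supported
on `W p` whose values `a (p, s)`, `s ∈ W p`, are so lacunary in the pair `(p, s)` that bounded
products of weights cannot turn one of them into another, and let `E p` be the set of times at
which the orbit of `x` is `1 / (p + 2)`-close to `y p`. If `n + s = m + t` with `n ∈ E p`, `s ∈ W p`,
`m ∈ E q`, `t ∈ W q`, then `P s n * x (n + s)` is close to `a (p, s)` and `P t m * x (n + s)` is close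
to `a (q, t)`, while the ratio of the two products is controlled by `|s - t|`; hence
`(p, s) = (q, t)` (`collision_lt`). This yields (b), and also shows in (d) that the coordinate
`m - n + t` lies outside `W p`, where `Tⁿ x` is small. Condition (c) holds because `x` vanishes at
infinity.

*Changing `M`.* Replacing `E` by `E ∘ φ` with `φ` strictly increasing fast enough makes any
prescribed sequence `M` admissible, and makes the sets `E p` pairwise disjoint
(`exists_cond_of_cond`).

*Sufficiency.* Let `y p` be a dense sequence of vectors with `y p` supported on `W p`, and choose
`M` large compared with `‖y p‖`. Put `x (n + t) = y p t / P t n` for `n ∈ E p`, `t ∈ W p`, and `0`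
elsewhere. Conditions (b) and (d) make this unambiguous, (d) says that `Tⁿ x` is close to `y p` for
`n ∈ E p`, and (c) with (d) put `x` in `c₀(I)`.
-/

open Filter

/-- The lower density of a set `A ⊆ ℕ`. -/
noncomputable def ldens (A : Set ℕ) : ℝ :=
  atTop.liminf fun N : ℕ => ((A ∩ Set.Iic N).ncard : ℝ) / (N : ℝ)

/-- Membership in `c₀(I)` for `I ⊆ ℝ`, modelled by functions on ℝ vanishing off `I`:
the function is supported on `I` and for every `ε > 0` only finitely many values
have absolute value `≥ ε`. -/
def Memc0On (I : Set ℝ) (x : ℝ → ℝ) : Prop :=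
  (∀ i ∉ I, x i = 0) ∧ ∀ ε : ℝ, 0 < ε → {i : ℝ | ε ≤ |x i|}.Finite

open Classical in
/-- The weighted shift `T[(x_i)_{i∈I}] = (w_i x_{i+1})_{i∈I}`, extended by `0` off `I`. -/
noncomputable def Tshift (I : Set ℝ) (w : ℝ → ℝ) (x : ℝ → ℝ) : ℝ → ℝ :=
  fun i => if i ∈ I then w i * x (i + 1) else 0

/-- Frequent hypercyclicity of `T` on `c₀(I)`. -/
def FHshift (I : Set ℝ) (w : ℝ → ℝ) : Prop :=
  ∃ x : ℝ → ℝ, Memc0On I x ∧ ∀ y : ℝ → ℝ, Memc0On I y → ∀ ε : ℝ, 0 < ε →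
    0 < ldens {n : ℕ | ∀ i : ℝ, |(Tshift I w)^[n] x i - y i| ≤ ε}

/-- A sequence of positive real numbers tending to `∞`. -/
def GoodM (M : ℕ → ℝ) : Prop := (∀ p, 0 < M p) ∧ Tendsto M atTop atTop

/-- Conditions (a)–(d) of STATEMENT 1. -/
def Cond1 (w : ℝ → ℝ) (W : ℕ → Set ℝ) (M : ℕ → ℝ) (E : ℕ → Set ℕ) : Prop :=
  (∀ p : ℕ, 1 ≤ p → 0 < ldens (E p)) ∧
  (∀ p q : ℕ, 1 ≤ p → 1 ≤ q → p ≠ q → ∀ n ∈ E p, ∀ m ∈ E q,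
      ∀ s ∈ W p, ∀ t ∈ W q, (n : ℝ) + s ≠ (m : ℝ) + t) ∧
  (∀ p : ℕ, 1 ≤ p → ∀ s ∈ W p,
      Tendsto (fun n : ℕ => ∏ j ∈ Finset.range n, w (s + (j : ℝ)))
        (atTop ⊓ Filter.principal (E p)) atTop) ∧
  (∀ p q : ℕ, 1 ≤ p → 1 ≤ q → ∀ n ∈ E p, ∀ m ∈ E q, m ≠ n → ∀ t ∈ W q,
      (∏ j ∈ Finset.range n, w ((m : ℝ) - (n : ℝ) + t + (j : ℝ))) /
          (∏ j ∈ Finset.range m, w (t + (j : ℝ))) ≤ 1 / (M p * M q))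

/-! ### Lower density -/

lemma ldens_ratio_nonneg (A : Set ℕ) (N : ℕ) : 0 ≤ ((A ∩ Set.Iic N).ncard : ℝ) / (N : ℝ) := by
  positivity

lemma ldens_ratio_le (A : Set ℕ) (N : ℕ) : ((A ∩ Set.Iic N).ncard : ℝ) / (N : ℝ) ≤ 2 := by
  rcases Nat.eq_zero_or_pos N with rfl | hN
  · simp
  have h1 : (A ∩ Set.Iic N).ncard ≤ N + 1 := by
    have h := Set.ncard_le_ncard (Set.inter_subset_right : A ∩ Set.Iic N ⊆ Set.Iic N)
      (Set.finite_Iic N)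
    have h2 : (Set.Iic N).ncard = N + 1 := by
      rw [← Finset.coe_Iic, Set.ncard_coe_finset, Nat.card_Iic]
    omega
  have hN' : (1 : ℝ) ≤ N := by exact_mod_cast hN
  have h1' : ((A ∩ Set.Iic N).ncard : ℝ) ≤ N + 1 := by exact_mod_cast h1
  rw [div_le_iff₀ (by linarith)]
  linarith

lemma ldens_mono {A B : Set ℕ} (h : A ⊆ B) : ldens A ≤ ldens B := by
  unfold ldens
  refine liminf_le_liminf (Eventually.of_forall fun N => ?_) ?_ ?_
  · have : (A ∩ Set.Iic N).ncard ≤ (B ∩ Set.Iic N).ncard :=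
      Set.ncard_le_ncard (Set.inter_subset_inter_left _ h)
        ((Set.finite_Iic N).subset Set.inter_subset_right)
    show ((A ∩ Set.Iic N).ncard : ℝ) / (N : ℝ) ≤ ((B ∩ Set.Iic N).ncard : ℝ) / (N : ℝ)
    gcongr
  · exact isBoundedUnder_of ⟨0, fun N => ldens_ratio_nonneg A N⟩
  · exact (isBoundedUnder_of ⟨2, fun N => ldens_ratio_le B N⟩).isCoboundedUnder_ge

lemma nonempty_of_ldens_pos {A : Set ℕ} (h : 0 < ldens A) : A.Nonempty := by
  rw [Set.nonempty_iff_ne_empty]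
  rintro rfl
  simp [ldens] at h

/-! ### Products of weights and iterates of the shift -/

/-- The product `w s * w (s + 1) * ⋯ * w (s + n - 1)`. -/
def wprod (w : ℝ → ℝ) (s : ℝ) (n : ℕ) : ℝ := ∏ j ∈ Finset.range n, w (s + (j : ℝ))

lemma wprod_add (w : ℝ → ℝ) (s : ℝ) (a b : ℕ) :
    wprod w s (a + b) = wprod w s a * wprod w (s + a) b := by
  unfold wprod
  rw [Finset.prod_range_add]
  congr 1
  refine Finset.prod_congr rfl fun j _ => ?_
  push_cast
  rw [add_assoc]

lemma add_nat_mem {I : Set ℝ} (hIZ : ∀ i ∈ I, ∀ k : ℤ, i + (k : ℝ) ∈ I) {s : ℝ} (hs : s ∈ I)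
    (n : ℕ) : s + (n : ℝ) ∈ I := by
  simpa using hIZ s hs (n : ℤ)

lemma sub_sub_mem {I : Set ℝ} (hIZ : ∀ i ∈ I, ∀ k : ℤ, i + (k : ℝ) ∈ I) {t : ℝ} (ht : t ∈ I)
    (m n : ℕ) : (m : ℝ) - n + t ∈ I := by
  have := hIZ t ht ((m : ℤ) - n)
  push_cast at this
  rwa [add_comm] at this

lemma wprod_pos {I : Set ℝ} (hIZ : ∀ i ∈ I, ∀ k : ℤ, i + (k : ℝ) ∈ I) {w : ℝ → ℝ}
    (hw : ∀ i ∈ I, 0 < w i) {s : ℝ} (hs : s ∈ I) (n : ℕ) : 0 < wprod w s n :=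
  Finset.prod_pos fun j _ => hw _ (add_nat_mem hIZ hs j)

lemma wprod_le {I : Set ℝ} (hIZ : ∀ i ∈ I, ∀ k : ℤ, i + (k : ℝ) ∈ I) {w : ℝ → ℝ}
    (hw : ∀ i ∈ I, 0 < w i) {D : ℝ} (hD : ∀ i ∈ I, w i ≤ D) {s : ℝ} (hs : s ∈ I) (n : ℕ) :
    wprod w s n ≤ D ^ n := by
  have := Finset.prod_le_prod (s := Finset.range n) (f := fun j : ℕ => w (s + j))
    (g := fun _ => D) (fun j _ => (hw _ (add_nat_mem hIZ hs j)).le)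
    (fun j _ => hD _ (add_nat_mem hIZ hs j))
  simpa [wprod] using this

lemma le_wprod {I : Set ℝ} (hIZ : ∀ i ∈ I, ∀ k : ℤ, i + (k : ℝ) ∈ I) {w : ℝ → ℝ}
    {c : ℝ} (hc : 0 < c) (hcw : ∀ i ∈ I, c ≤ w i) {s : ℝ} (hs : s ∈ I) (n : ℕ) :
    c ^ n ≤ wprod w s n := by
  have := Finset.prod_le_prod (s := Finset.range n) (f := fun _ => c)
    (g := fun j : ℕ => w (s + j)) (fun j _ => hc.le)
    (fun j _ => hcw _ (add_nat_mem hIZ hs j))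
  simpa [wprod] using this

lemma Tshift_iterate {I : Set ℝ} (hIZ : ∀ i ∈ I, ∀ k : ℤ, i + (k : ℝ) ∈ I) (w : ℝ → ℝ) (n : ℕ) :
    ∀ x : ℝ → ℝ, (∀ i ∉ I, x i = 0) → ∀ i, (Tshift I w)^[n] x i = wprod w i n * x (i + n) := by
  induction n with
  | zero => intro x _ i; simp [wprod]
  | succ n ih =>
    intro x hx i
    rw [Function.iterate_succ_apply, ih]
    · have h1 : wprod w i (n + 1) = wprod w i n * w (i + n) := by
        simp [wprod, Finset.prod_range_succ]
      rw [h1]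
      unfold Tshift
      split_ifs with h
      · push_cast
        rw [add_assoc, mul_assoc]
      · rw [hx (i + ((n + 1 : ℕ) : ℝ))]
        · simp
        · intro h'
          apply h
          have := hIZ _ h' (-1)
          convert this using 1
          push_cast
          ring
    · intro j hj
      simp [Tshift, hj]

/-- Two products of weights ending at the same point `n + s = m + t` are comparable, with a
constant depending only on `|s - t|`. -/
lemma wprod_le_mul {I : Set ℝ} (hIZ : ∀ i ∈ I, ∀ k : ℤ, i + (k : ℝ) ∈ I) {w : ℝ → ℝ}
    {D : ℝ} (hD1 : 1 ≤ D) (hw : ∀ i ∈ I, D⁻¹ ≤ w i) (hD : ∀ i ∈ I, w i ≤ D)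
    {s t : ℝ} (hs : s ∈ I) (ht : t ∈ I) {n m : ℕ} (h : (n : ℝ) + s = m + t) :
    wprod w t m ≤ D ^ ⌈|s - t|⌉₊ * wprod w s n := by
  have hD0 : 0 < D := by linarith
  have hw0 : ∀ i ∈ I, 0 < w i := fun i hi => (inv_pos.2 hD0).trans_le (hw i hi)
  rcases le_total n m with hnm | hnm
  · obtain ⟨d, rfl⟩ := Nat.exists_eq_add_of_le hnm
    have hst : s = t + d := by push_cast at h; linarith
    have hd : d ≤ ⌈|s - t|⌉₊ := by
      have : |s - t| = (d : ℝ) := by rw [hst]; simp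
      rw [this]; simp
    rw [add_comm n d, wprod_add, ← hst]
    have h1 := wprod_le hIZ hw0 hD ht d
    have h2 := wprod_pos hIZ hw0 hs n
    have h3 : D ^ d ≤ D ^ ⌈|s - t|⌉₊ := pow_le_pow_right₀ hD1 hd
    gcongr
    exact h1.trans h3
  · obtain ⟨d, rfl⟩ := Nat.exists_eq_add_of_le hnm
    have hst : t = s + d := by push_cast at h; linarith
    have hd : d ≤ ⌈|s - t|⌉₊ := by
      have : |s - t| = (d : ℝ) := by rw [hst]; simp
      rw [this]; simp
    rw [add_comm m d, wprod_add, ← hst]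
    have h1 := le_wprod hIZ (inv_pos.2 hD0) hw hs d
    have h2 := wprod_pos hIZ hw0 ht m
    have h3 : D ^ d ≤ D ^ ⌈|s - t|⌉₊ := pow_le_pow_right₀ hD1 hd
    have h4 : 1 ≤ D ^ ⌈|s - t|⌉₊ * wprod w s d := by
      calc (1 : ℝ) = D ^ d * (D⁻¹) ^ d := by
            rw [← mul_pow, mul_inv_cancel₀ hD0.ne', one_pow]
        _ ≤ _ := by gcongr
    rw [← mul_assoc]
    nlinarith

/-! ### Necessity -/

/-- A sequence growing as fast as prescribed relative to all of its previous terms. -/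
lemma exists_lacunary (f : ℕ → ℕ → ℝ) :
    ∃ a : ℕ → ℝ, (∀ k : ℕ, (k : ℝ) + 2 ≤ a k) ∧ ∀ j k, j < k → f j k * a j ≤ a k := by
  set B : ℕ → ℝ := fun k => 1 + ∑ j ∈ Finset.range k, |f j k| with hB
  have hB1 : ∀ k, 1 ≤ B k := fun k => by
    have : 0 ≤ ∑ j ∈ Finset.range k, |f j k| := Finset.sum_nonneg fun _ _ => abs_nonneg _
    simp only [hB]; linarith
  let a : ℕ → ℝ := fun k => Nat.rec (motive := fun _ => ℝ) 2
    (fun k r => B (k + 1) * r + ((k : ℝ) + 3)) k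
  have ha0 : a 0 = 2 := rfl
  have has : ∀ k, a (k + 1) = B (k + 1) * a k + ((k : ℝ) + 3) := fun k => rfl
  have hpos : ∀ k, 0 < a k := by
    intro k
    induction k with
    | zero => rw [ha0]; norm_num
    | succ k ih => rw [has]; have := hB1 (k + 1); positivity
  have hmono : Monotone a := monotone_nat_of_le_succ fun k => by
    rw [has]
    have h1 := hB1 (k + 1)
    have h2 := hpos k
    have h3 : (0 : ℝ) ≤ k := by positivity
    nlinarith
  refine ⟨a, ?_, ?_⟩
  · rintro (_ | k)
    · rw [ha0]; norm_num
    · rw [has]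
      have h1 := hB1 (k + 1)
      have h2 := hpos k
      push_cast
      nlinarith
  · intro j k hjk
    obtain ⟨k, rfl⟩ : ∃ k', k = k' + 1 := ⟨k - 1, by omega⟩
    have h1 : |f j (k + 1)| ≤ B (k + 1) := by
      have := Finset.single_le_sum (f := fun j => |f j (k + 1)|) (fun _ _ => abs_nonneg _)
        (Finset.mem_range.2 hjk)
      simp only [hB]
      linarith
    have h2 : a j ≤ a k := hmono (by omega)
    have h3 := hpos j
    rw [has]
    calc f j (k + 1) * a j ≤ |f j (k + 1)| * a j := by gcongr; exact le_abs_self _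
      _ ≤ B (k + 1) * a k := by gcongr
      _ ≤ _ := by linarith [(by positivity : (0 : ℝ) ≤ (k : ℝ) + 3)]

/-- If two products of weights ending at the same point map the coordinate `X` of `x` there close
to `α` and to `β`, then `β` cannot be much larger than `α`. -/
lemma collision_lt {I : Set ℝ} (hIZ : ∀ i ∈ I, ∀ k : ℤ, i + (k : ℝ) ∈ I) {w : ℝ → ℝ}
    {D : ℝ} (hD1 : 1 ≤ D) (hw : ∀ i ∈ I, D⁻¹ ≤ w i) (hD : ∀ i ∈ I, w i ≤ D)
    {s t : ℝ} (hs : s ∈ I) (ht : t ∈ I) {n m : ℕ} (h : (n : ℝ) + s = m + t) {X α β : ℝ}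
    (hα : 2 ≤ α) (h1 : |wprod w s n * X - α| ≤ 1 / 2) (h2 : |wprod w t m * X - β| ≤ 1 / 2) :
    β < 2 * D ^ ⌈|s - t|⌉₊ * α := by
  have hD0 : 0 < D := by linarith
  have hw0 : ∀ i ∈ I, 0 < w i := fun i hi => (inv_pos.2 hD0).trans_le (hw i hi)
  have hP := wprod_pos hIZ hw0 hs n
  have hle := wprod_le_mul hIZ hD1 hw hD hs ht h
  rw [abs_le] at h1 h2
  have hX : 0 < X := by
    by_contra hX
    push Not at hX
    nlinarith
  have hK : 1 ≤ D ^ ⌈|s - t|⌉₊ := one_le_pow₀ hD1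
  have h3 : wprod w t m * X ≤ D ^ ⌈|s - t|⌉₊ * (wprod w s n * X) := by
    rw [← mul_assoc]; gcongr
  nlinarith

lemma cond_of_FHshift (I : Set ℝ) (hIc : I.Countable) (hIinf : I.Infinite)
    (hIZ : ∀ i ∈ I, ∀ k : ℤ, i + (k : ℝ) ∈ I)
    (W : ℕ → Set ℝ) (hWfin : ∀ p, (W p).Finite)
    (hWsub : ∀ p, W p ⊆ I) (w : ℝ → ℝ)
    {D : ℝ} (hD1 : 1 ≤ D) (hw : ∀ i ∈ I, D⁻¹ ≤ w i) (hD : ∀ i ∈ I, w i ≤ D)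
    (hFH : FHshift I w) : ∃ M : ℕ → ℝ, GoodM M ∧ ∃ E : ℕ → Set ℕ, Cond1 w W M E := by
  classical
  have hD0 : 0 < D := by linarith
  have hw0 : ∀ i ∈ I, 0 < w i := fun i hi => (inv_pos.2 hD0).trans_le (hw i hi)
  obtain ⟨x, ⟨hxI, hx0⟩, hx⟩ := hFH
  obtain ⟨u, hu⟩ := hIc.exists_eq_range hIinf.nonempty
  have hu' : ∀ s : ℝ, ∃ k, s ∈ I → u k = s := fun s => by
    by_cases hs : s ∈ I
    · rw [hu] at hs
      obtain ⟨k, hk⟩ := hs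
      exact ⟨k, fun _ => hk⟩
    · exact ⟨0, fun h => absurd h hs⟩
  choose e he using hu'
  obtain ⟨a, ha2, hlac⟩ := exists_lacunary
    fun j k => 2 * D ^ ⌈|u j.unpair.2 - u k.unpair.2|⌉₊
  have hap : ∀ p k : ℕ, (p : ℝ) + 2 ≤ a (Nat.pair p k) := fun p k => by
    have h1 : (p : ℝ) ≤ Nat.pair p k := by exact_mod_cast Nat.left_le_pair p k
    linarith [ha2 (Nat.pair p k)]
  set y : ℕ → ℝ → ℝ := fun p s => if s ∈ W p then a (Nat.pair p (e s)) else 0 with hy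
  set E : ℕ → Set ℕ := fun p =>
    {n : ℕ | ∀ i : ℝ, |(Tshift I w)^[n] x i - y p i| ≤ 1 / ((p : ℝ) + 2)} with hE
  have hEin : ∀ p, ∀ n ∈ E p, ∀ s ∈ W p,
      |wprod w s n * x (n + s) - a (Nat.pair p (e s))| ≤ 1 / ((p : ℝ) + 2) := by
    intro p n hn s hs
    have := hn s
    rw [Tshift_iterate hIZ w n x hxI] at this
    simpa [hy, hs, add_comm] using this
  have hhalf : ∀ p : ℕ, 1 / ((p : ℝ) + 2) ≤ 1 / 2 := fun p => by
    have : (0 : ℝ) ≤ p := by positivity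
    gcongr
    linarith
  have hEout : ∀ p, ∀ n ∈ E p, ∀ s ∉ W p,
      |wprod w s n * x (n + s)| ≤ 1 / ((p : ℝ) + 2) := by
    intro p n hn s hs
    have := hn s
    rw [Tshift_iterate hIZ w n x hxI] at this
    simpa [hy, hs, add_comm] using this
  have hnotlt : ∀ p q, ∀ n ∈ E p, ∀ m ∈ E q, ∀ s ∈ W p, ∀ t ∈ W q, (n : ℝ) + s = m + t →
      ¬ Nat.pair p (e s) < Nat.pair q (e t) := by
    intro p q n hn m hm s hs t ht hst hlt
    have h1 := (hEin p n hn s hs).trans (hhalf p)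
    have h2 := (hEin q m hm t ht).trans (hhalf q)
    rw [← hst] at h2
    have h3 := collision_lt hIZ hD1 hw hD (hWsub p hs) (hWsub q ht) hst
      (by linarith [ha2 (Nat.pair p (e s)), (by positivity : (0 : ℝ) ≤ ((Nat.pair p (e s) : ℕ) : ℝ))])
      h1 h2
    have h4 := hlac _ _ hlt
    simp only [Nat.unpair_pair, he s (hWsub p hs), he t (hWsub q ht)] at h4
    linarith
  have hkey : ∀ p q, ∀ n ∈ E p, ∀ m ∈ E q, ∀ s ∈ W p, ∀ t ∈ W q, (n : ℝ) + s = m + t →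
      p = q ∧ s = t := by
    intro p q n hn m hm s hs t ht hst
    have h1 := hnotlt p q n hn m hm s hs t ht hst
    have h2 := hnotlt q p m hm n hn t ht s hs hst.symm
    have h3 := Nat.pair_eq_pair.1 (le_antisymm (not_lt.1 h2) (not_lt.1 h1))
    refine ⟨h3.1, ?_⟩
    rw [← he s (hWsub p hs), ← he t (hWsub q ht), h3.2]
  have hlow : ∀ p, ∀ n ∈ E p, ∀ s ∈ W p, (p : ℝ) + 1 ≤ wprod w s n * x (n + s) := by
    intro p n hn s hs
    have h1 := (hEin p n hn s hs).trans (hhalf p)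
    rw [abs_le] at h1
    linarith [hap p (e s)]
  refine ⟨fun p => (p : ℝ) + 1, ⟨fun p => by positivity,
    tendsto_atTop_add_const_right _ _ tendsto_natCast_atTop_atTop⟩, E, ?_, ?_, ?_, ?_⟩
  · intro p _
    refine hx (y p) ⟨?_, ?_⟩ _ (by positivity)
    · intro i hi
      have : i ∉ W p := fun h => hi (hWsub p h)
      simp [hy, this]
    · intro ε hε
      refine (hWfin p).subset fun i hi => ?_
      by_contra h
      simp only [Set.mem_ofPred_eq, hy, h, if_false, abs_zero] at hi
      linarith
  · intro p q _ _ hpq n hn m hm s hs t ht hst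
    exact hpq (hkey p q n hn m hm s hs t ht hst).1
  · intro p _ s hs
    rw [tendsto_atTop]
    intro R
    rw [eventually_inf_principal]
    have hfin := (hx0 (1 / (|R| + 1)) (by positivity)).preimage
      (f := fun n : ℕ => (n : ℝ) + s) (by intro a _ b _ h; simpa using h)
    have hev := hfin.eventually_cofinite_notMem
    rw [Nat.cofinite_eq_atTop] at hev
    filter_upwards [hev] with n hn hnE
    simp only [Set.mem_preimage, Set.mem_ofPred_eq, not_le] at hn
    have h1 := hlow p n hnE s hs
    have hP := wprod_pos hIZ hw0 (hWsub p hs) n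
    change R ≤ wprod w s n
    have h2 : x (n + s) < 1 / (|R| + 1) := (le_abs_self _).trans_lt hn
    have h3 : 1 ≤ wprod w s n * (1 / (|R| + 1)) := by
      have : (0 : ℝ) ≤ p := by positivity
      nlinarith
    rw [mul_one_div, le_div_iff₀ (by positivity)] at h3
    linarith [le_abs_self R]
  · intro p q _ _ n hn m hm hmn t ht
    change wprod w ((m : ℝ) - n + t) n / wprod w t m ≤ 1 / (((p : ℝ) + 1) * (q + 1))
    have hi : (m : ℝ) - n + t ∉ W p := by
      intro hi
      have := (hkey p q n hn m hm _ hi t ht (by ring)).2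
      apply hmn
      have : (m : ℝ) = n := by linarith
      exact_mod_cast this
    have h1 := hEout p n hn _ hi
    rw [show (n : ℝ) + (m - n + t) = m + t by ring] at h1
    have h2 := hlow q m hm t ht
    have hP := wprod_pos hIZ hw0 (hWsub q ht) m
    have hQ := wprod_pos hIZ hw0 (sub_sub_mem hIZ (hWsub q ht) m n) n
    have hX : 0 < x (m + t) := by
      by_contra hX
      push Not at hX
      have : (0 : ℝ) ≤ q := by positivity
      nlinarith
    have h1' := (le_abs_self _).trans h1
    rw [← mul_div_mul_right _ _ hX.ne']
    calc _ ≤ (1 / ((p : ℝ) + 2)) / ((q : ℝ) + 1) := by gcongr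
      _ ≤ (1 / ((p : ℝ) + 1)) / ((q : ℝ) + 1) := by gcongr; norm_num
      _ = _ := by rw [div_div]

/-! ### Changing the sequence `M` -/

/-- Passing to a fast subsequence of `E` realizes any prescribed `M`; starting it beyond the first
nonempty `W p` also makes the sets pairwise disjoint. -/
lemma exists_cond_of_cond (I : Set ℝ) (hIinf : I.Infinite)
    (W : ℕ → Set ℝ) (hWmono : Monotone W) (hWunion : (⋃ p, W p) = I) (w : ℝ → ℝ)
    {M : ℕ → ℝ} (hM : GoodM M) {E : ℕ → Set ℕ} (hE : Cond1 w W M E)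
    {M' : ℕ → ℝ} (hM' : ∀ p, 0 < M' p) :
    ∃ E' : ℕ → Set ℕ, Cond1 w W M' E' ∧
      ∀ p q, p ≠ q → ∀ n ∈ E' p, n ∉ E' q := by
  obtain ⟨s₀, hs₀⟩ := hIinf.nonempty
  rw [← hWunion] at hs₀
  obtain ⟨p₀, hp₀⟩ := Set.mem_iUnion.1 hs₀
  have hev : ∀ p : ℕ, ∀ᶠ k in atTop, M' p ≤ M k := fun p => hM.2.eventually_ge_atTop _
  obtain ⟨φ, hφ, hφM⟩ := extraction_forall_of_eventually
    (P := fun n k => M' n ≤ M k ∧ p₀ ≤ k ∧ 1 ≤ k)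
    (fun n => (hev n).and ((eventually_ge_atTop _).and (eventually_ge_atTop _)))
  obtain ⟨ha, hb, hc, hd⟩ := hE
  have hW : ∀ p, W p ⊆ W (φ p) := fun p => hWmono (hφ.id_le p)
  refine ⟨fun p => E (φ p), ⟨?_, ?_, ?_, ?_⟩, ?_⟩
  · intro p _
    exact ha _ (hφM p).2.2
  · intro p q _ _ hpq n hn m hm s hs t ht
    exact hb _ _ (hφM p).2.2 (hφM q).2.2 (hφ.injective.ne hpq) n hn m hm s (hW p hs) t (hW q ht)
  · intro p _ s hs
    exact hc _ (hφM p).2.2 s (hW p hs)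
  · intro p q _ _ n hn m hm hmn t ht
    refine (hd _ _ (hφM p).2.2 (hφM q).2.2 n hn m hm hmn t (hW q ht)).trans ?_
    have h1 := hM' p
    have h2 := hM' q
    have h3 := (hφM p).1
    have h4 := (hφM q).1
    have h5 := hM.1 (φ p)
    gcongr
  · intro p q hpq n hn hn'
    exact hb _ _ (hφM p).2.2 (hφM q).2.2 (hφ.injective.ne hpq) n hn n hn' s₀
      (hWmono (hφM p).2.1 hp₀) s₀ (hWmono (hφM q).2.1 hp₀) rfl

/-! ### Sufficiency -/

/-- A dense sequence in `c₀(I)` whose `p`-th term is supported on `W p`, and each of whose tails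
is dense as well. -/
lemma exists_dense_seq (I : Set ℝ) (hIc : I.Countable)
    (W : ℕ → Set ℝ) (hWfin : ∀ p, (W p).Finite) (hWmono : Monotone W)
    (hWsub : ∀ p, W p ⊆ I) (hWunion : (⋃ p, W p) = I) :
    ∃ (y : ℕ → ℝ → ℝ) (b : ℕ → ℝ), (∀ p i, |y p i| ≤ b p) ∧ (∀ p, ∀ i ∉ W p, y p i = 0) ∧
      ∀ z, Memc0On I z → ∀ ε : ℝ, 0 < ε → ∀ N : ℕ, ∃ p, N ≤ p ∧ ∀ i, |y p i - z i| ≤ ε := by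
  classical
  have : Countable I := hIc.to_subtype
  obtain ⟨u, hu⟩ := exists_surjective_nat (I →₀ ℚ)
  set y : ℕ → ℝ → ℝ := fun p i =>
    if h : i ∈ W p then ((u p.unpair.1 ⟨i, hWsub p h⟩ : ℚ) : ℝ) else 0 with hy
  have hy0 : ∀ p, ∀ i ∉ W p, y p i = 0 := fun p i hi => by simp [hy, hi]
  refine ⟨y, fun p => ∑ i ∈ (hWfin p).toFinset, |y p i|, ?_, hy0, ?_⟩
  · intro p i
    by_cases hi : i ∈ W p
    · exact Finset.single_le_sum (f := fun i => |y p i|) (fun _ _ => abs_nonneg _)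
        ((hWfin p).mem_toFinset.2 hi)
    · rw [hy0 p i hi, abs_zero]
      exact Finset.sum_nonneg fun _ _ => abs_nonneg _
  · intro z hz ε hε N
    have hS := hz.2 ε hε
    set S := {i : ℝ | ε ≤ |z i|} with hSdef
    have hSI : S ⊆ I := by
      intro i hi
      by_contra h
      simp only [hSdef, Set.mem_ofPred_eq, hz.1 i h, abs_zero] at hi
      linarith
    have hr : ∀ i : ℝ, ∃ r : ℚ, |(r : ℝ) - z i| < ε := fun i => by
      obtain ⟨r, h1, h2⟩ := exists_rat_btwn (show z i - ε < z i + ε by linarith)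
      exact ⟨r, by rw [abs_lt]; constructor <;> linarith⟩
    choose r hr using hr
    have hF : (Subtype.val ⁻¹' S : Set I).Finite := hS.preimage Subtype.val_injective.injOn
    obtain ⟨k, hk⟩ := hu (Finsupp.onFinset hF.toFinset
      (fun i : I => if (i : ℝ) ∈ S then r i else 0) (by
        intro i hi
        simp only [ne_eq, ite_eq_right_iff, not_forall] at hi
        simpa using hi.1))
    have hev : ∀ᶠ p in atTop, ∀ i ∈ S, i ∈ W p := by
      rw [eventually_all_finite hS]
      intro i hi
      have := hSI hi
      rw [← hWunion] at this
      obtain ⟨p₀, hp₀⟩ := Set.mem_iUnion.1 this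
      filter_upwards [eventually_ge_atTop p₀] with p hp using hWmono hp hp₀
    obtain ⟨N', hN'⟩ := eventually_atTop.1 hev
    have hp1 : max N N' ≤ Nat.pair k (max N N') := Nat.right_le_pair _ _
    refine ⟨Nat.pair k (max N N'), (le_max_left _ _).trans hp1, fun i => ?_⟩
    have hSW := hN' _ ((le_max_right _ _).trans hp1)
    by_cases hi : i ∈ S
    · have : y (Nat.pair k (max N N')) i = r i := by
        simp [hy, hSW i hi, hk, hi]
      rw [this]
      exact (hr i).le
    · have : y (Nat.pair k (max N N')) i = 0 := by
        simp [hy, hk, hi]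
      rw [this, zero_sub, abs_neg]
      simp only [hSdef, Set.mem_ofPred_eq, not_le] at hi
      exact hi.le

/-- Conditions (b) and (d), with all `M p > 1`, make `n + t` determine `p`, `n` and `t`. For equal
`p`, a collision with `n ≠ m` would bound both a ratio and its inverse by a number `< 1`. -/
lemma unique_repr {I : Set ℝ} (hIZ : ∀ i ∈ I, ∀ k : ℤ, i + (k : ℝ) ∈ I)
    {W : ℕ → Set ℝ} (hWsub : ∀ p, W p ⊆ I) {w : ℝ → ℝ} (hw0 : ∀ i ∈ I, 0 < w i)
    {M : ℕ → ℝ} (hM1 : ∀ p, 1 < M p) {E : ℕ → Set ℕ} (hE : Cond1 w W M E)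
    {p q : ℕ} (hp : 1 ≤ p) (hq : 1 ≤ q) {n m : ℕ} (hn : n ∈ E p) (hm : m ∈ E q) {s t : ℝ}
    (hs : s ∈ W p) (ht : t ∈ W q) (h : (n : ℝ) + s = m + t) : p = q ∧ n = m ∧ s = t := by
  obtain ⟨-, hb, -, hd⟩ := hE
  by_cases hpq : p = q
  · subst hpq
    by_cases hnm : n = m
    · subst hnm
      exact ⟨rfl, rfl, by linarith⟩
    exfalso
    have h1 : wprod w (m - n + t) n / wprod w t m ≤ 1 / (M p * M p) :=
      hd p p hp hp n hn m hm (Ne.symm hnm) t ht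
    have h2 : wprod w (n - m + s) m / wprod w s n ≤ 1 / (M p * M p) :=
      hd p p hp hp m hm n hn hnm s hs
    rw [show (m : ℝ) - n + t = s by linarith] at h1
    rw [show (n : ℝ) - m + s = t by linarith] at h2
    have hP := wprod_pos hIZ hw0 (hWsub p hs) n
    have hQ := wprod_pos hIZ hw0 (hWsub p ht) m
    have hlt : 1 / (M p * M p) < 1 := by
      rw [div_lt_one (by nlinarith [hM1 p])]
      nlinarith [hM1 p]
    have h3 := h1.trans_lt hlt
    have h4 := h2.trans_lt hlt
    rw [div_lt_one hQ] at h3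
    rw [div_lt_one hP] at h4
    linarith
  · exact absurd h (hb p q hp hq hpq n hn m hm s hs t ht)

lemma FHshift_of_cond (I : Set ℝ) (hIc : I.Countable) (hIinf : I.Infinite)
    (hIZ : ∀ i ∈ I, ∀ k : ℤ, i + (k : ℝ) ∈ I)
    (W : ℕ → Set ℝ) (hWfin : ∀ p, (W p).Finite) (hWmono : Monotone W)
    (hWsub : ∀ p, W p ⊆ I) (hWunion : (⋃ p, W p) = I) (w : ℝ → ℝ)
    {c : ℝ} (hc : 0 < c) (hcw : ∀ i ∈ I, c ≤ w i)
    {M₀ : ℕ → ℝ} (hM₀ : GoodM M₀) {E₀ : ℕ → Set ℕ} (hE₀ : Cond1 w W M₀ E₀) : FHshift I w := by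
  classical
  have hw0 : ∀ i ∈ I, 0 < w i := fun i hi => hc.trans_le (hcw i hi)
  obtain ⟨y, b, hyb, hyW, hdense⟩ := exists_dense_seq I hIc W hWfin hWmono hWsub hWunion
  have hb0 : ∀ p, 0 ≤ b p := fun p => (abs_nonneg _).trans (hyb p 0)
  -- `M` dominates `(p + 2) * ‖y p‖`, both for the approximation and for the decay of `x`.
  set M : ℕ → ℝ := fun p => ((p : ℝ) + 2) * (1 + b p) with hMdef
  have hMp : ∀ p : ℕ, (p : ℝ) + 2 ≤ M p := fun p => by
    have h1 := hb0 p
    have h2 : (0 : ℝ) ≤ p := by positivity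
    simp only [hMdef]
    nlinarith
  have hM1 : ∀ p, 1 < M p := fun p => by
    have h2 : (0 : ℝ) ≤ p := by positivity
    linarith [hMp p]
  have hM0 : ∀ p, 0 < M p := fun p => by linarith [hM1 p]
  have hbM : ∀ p, b p / M p ≤ 1 / ((p : ℝ) + 2) := fun p => by
    have h1 := hb0 p
    rw [div_le_div_iff₀ (hM0 p) (by positivity)]
    simp only [hMdef]
    have h2 : (0 : ℝ) ≤ p := by positivity
    nlinarith
  obtain ⟨E, hE, hdisj⟩ := exists_cond_of_cond I hIinf W hWmono hWunion w hM₀ hE₀ hM0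
  have huniq := fun p q hp hq n m hn hm s t hs ht =>
    unique_repr hIZ hWsub hw0 hM1 hE (p := p) (q := q) hp hq (n := n) (m := m) hn hm
      (s := s) (t := t) hs ht
  obtain ⟨hEa, -, hEc, hEd⟩ := hE
  set R : ℝ → ℕ × ℕ × ℝ → Prop := fun i r =>
    1 ≤ r.1 ∧ r.2.1 ∈ E r.1 ∧ r.2.2 ∈ W r.1 ∧ i = r.2.1 + r.2.2 with hR
  set x : ℝ → ℝ := fun i => if h : ∃ r, R i r then
    y h.choose.1 h.choose.2.2 / wprod w h.choose.2.2 h.choose.2.1 else 0 with hxdef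
  have hxval : ∀ p, 1 ≤ p → ∀ n ∈ E p, ∀ t ∈ W p, x (n + t) = y p t / wprod w t n := by
    intro p hp n hn t ht
    have hex : ∃ r, R (n + t) r := ⟨(p, n, t), hp, hn, ht, rfl⟩
    obtain ⟨k1, k2, k3, k4⟩ := hex.choose_spec
    obtain ⟨e1, e2, e3⟩ := huniq _ _ hp k1 _ _ hn k2 _ _ ht k3 k4
    simp only [hxdef, hex, dif_pos]
    rw [← e1, ← e2, ← e3]
  have hxzero : ∀ i, (¬ ∃ r, R i r) → x i = 0 := fun i hi => by simp only [hxdef, hi, dif_neg,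
    not_false_eq_true]
  have hxI : ∀ i ∉ I, x i = 0 := by
    intro i hi
    apply hxzero
    rintro ⟨⟨p, n, t⟩, -, -, ht, rfl⟩
    apply hi
    rw [add_comm]
    exact add_nat_mem hIZ (hWsub p ht) n
  obtain ⟨n₀, hn₀⟩ := nonempty_of_ldens_pos (hEa 1 le_rfl)
  -- For `q ≥ 2`, comparison with the fixed time `n₀ ∈ E 1` in (d) bounds the `q`-th block of `x`.
  have hblock : ∀ q, 2 ≤ q → ∀ m ∈ E q, ∀ t ∈ W q,
      |x (m + t)| ≤ (c ^ n₀)⁻¹ * (1 / ((q : ℝ) + 2)) := by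
    intro q hq m hm t ht
    have hmn : m ≠ n₀ := by
      rintro rfl
      exact hdisj q 1 (by omega) m hm hn₀
    have h1 : wprod w (m - n₀ + t) n₀ / wprod w t m ≤ 1 / (M 1 * M q) :=
      hEd 1 q le_rfl (by omega) n₀ hn₀ m hm hmn t ht
    have h2 := le_wprod hIZ hc hcw (sub_sub_mem hIZ (hWsub q ht) m n₀) n₀
    have hP := wprod_pos hIZ hw0 (hWsub q ht) m
    have hcn : 0 < c ^ n₀ := by positivity
    have h3 : 1 / (M 1 * M q) ≤ 1 / M q := by
      have := hM0 q
      have := hM1 1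
      gcongr
      nlinarith
    have h4 : c ^ n₀ / wprod w t m ≤ 1 / M q := by
      refine le_trans ?_ (h1.trans h3)
      gcongr
    rw [hxval q (by omega) m hm t ht, abs_div, abs_of_pos hP]
    calc |y q t| / wprod w t m ≤ b q / wprod w t m := by gcongr; exact hyb q t
      _ = (c ^ n₀)⁻¹ * (b q * (c ^ n₀ / wprod w t m)) := by field_simp
      _ ≤ (c ^ n₀)⁻¹ * (b q * (1 / M q)) := by
          have := hb0 q
          gcongr
      _ = (c ^ n₀)⁻¹ * (b q / M q) := by rw [mul_one_div]
      _ ≤ _ := by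
          have := hbM q
          gcongr
  have hxc0 : Memc0On I x := by
    refine ⟨hxI, fun ε hε => ?_⟩
    obtain ⟨Q, hQ⟩ := exists_nat_gt ((c ^ n₀)⁻¹ / ε)
    have hfin : (⋃ q ∈ Finset.Icc 1 (Q + 2), ⋃ t ∈ (hWfin q).toFinset,
        (fun m : ℕ => (m : ℝ) + t) '' {m : ℕ | m ∈ E q ∧ ε ≤ |x (m + t)|}).Finite := by
      refine Set.Finite.biUnion (Finset.finite_toSet _) fun q hq => ?_
      refine Set.Finite.biUnion (Finset.finite_toSet _) fun t ht => ?_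
      have hq1 : 1 ≤ q := (Finset.mem_Icc.1 hq).1
      have htW : t ∈ W q := by simpa using ht
      refine Set.Finite.image _ ?_
      have hev := (tendsto_atTop.1 (hEc q hq1 t htW)) ((b q + 1) / ε)
      rw [eventually_inf_principal, ← Nat.cofinite_eq_atTop, eventually_cofinite] at hev
      refine hev.subset ?_
      rintro m ⟨hm, hme⟩ himp
      have h1 : (b q + 1) / ε ≤ wprod w t m := himp hm
      have hP := wprod_pos hIZ hw0 (hWsub q htW) m
      rw [hxval q hq1 m hm t htW, abs_div, abs_of_pos hP, le_div_iff₀ hP] at hme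
      rw [div_le_iff₀ hε] at h1
      linarith [hyb q t]
    refine hfin.subset fun i hi => ?_
    simp only [Set.mem_ofPred_eq] at hi
    by_cases hex : ∃ r, R i r
    · obtain ⟨⟨q, m, t⟩, hq, hm, ht, hi'⟩ := hex
      simp only at hq hm ht hi'
      subst hi'
      have hqQ : q ≤ Q + 2 := by
        by_contra hlt
        push Not at hlt
        have h1 := hi.trans (hblock q (by omega) m hm t ht)
        have h2 : (Q : ℝ) + 2 ≤ q := by exact_mod_cast hlt.le
        rw [div_lt_iff₀ hε] at hQ
        rw [mul_one_div, le_div_iff₀ (by positivity)] at h1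
        nlinarith
      simp only [Set.mem_iUnion]
      exact ⟨q, Finset.mem_Icc.2 ⟨hq, hqQ⟩, t, (hWfin q).mem_toFinset.2 ht, m, ⟨hm, hi⟩, rfl⟩
    · rw [hxzero i hex, abs_zero] at hi
      linarith
  have happrox : ∀ p, 1 ≤ p → ∀ n ∈ E p, ∀ i,
      |(Tshift I w)^[n] x i - y p i| ≤ 1 / ((p : ℝ) + 2) := by
    intro p hp n hn i
    rw [Tshift_iterate hIZ w n x hxI, add_comm i]
    by_cases hi : i ∈ W p
    · have hP := wprod_pos hIZ hw0 (hWsub p hi) n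
      rw [hxval p hp n hn i hi, mul_div_cancel₀ _ hP.ne', sub_self, abs_zero]
      positivity
    · rw [hyW p i hi, sub_zero]
      by_cases hex : ∃ r, R (n + i) r
      · obtain ⟨⟨q, m, t⟩, hq, hm, ht, hi'⟩ := hex
        simp only at hq hm ht hi'
        have hmn : m ≠ n := by
          rintro rfl
          have hpq : p = q := by
            by_contra hpq
            exact hdisj p q hpq m hn hm
          subst hpq
          have : i = t := by linarith
          exact hi (this ▸ ht)
        have h1 : wprod w (m - n + t) n / wprod w t m ≤ 1 / (M p * M q) :=
          hEd p q hp hq n hn m hm hmn t ht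
        have hP := wprod_pos hIZ hw0 (hWsub q ht) m
        have hQ := wprod_pos hIZ hw0 (sub_sub_mem hIZ (hWsub q ht) m n) n
        have hii : i = (m : ℝ) - n + t := by linarith
        rw [hi', hxval q hq m hm t ht, hii, abs_mul, abs_of_pos hQ, abs_div, abs_of_pos hP]
        have hMq := hM0 q
        have hMp0 := hM0 p
        calc wprod w (m - n + t) n * (|y q t| / wprod w t m)
            = |y q t| * (wprod w (m - n + t) n / wprod w t m) := by ring
          _ ≤ b q * (1 / (M p * M q)) := by
              have := hb0 q
              have := hyb q t
              gcongr
          _ = (b q / M q) * (1 / M p) := by field_simp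
          _ ≤ 1 * (1 / ((p : ℝ) + 2)) := by
              have h5 := hMp p
              have h6 : b q / M q ≤ 1 := (hbM q).trans (by
                rw [div_le_one (by positivity)]
                linarith [(by positivity : (0 : ℝ) ≤ q)])
              gcongr
          _ = _ := one_mul _
      · rw [hxzero _ hex, mul_zero, abs_zero]
        positivity
  refine ⟨x, hxc0, fun z hz ε hε => ?_⟩
  obtain ⟨N, hN⟩ := exists_nat_gt (2 / ε)
  obtain ⟨p, hp, hpz⟩ := hdense z hz (ε / 2) (by linarith) (N + 1)
  refine (hEa p (by omega)).trans_le (ldens_mono fun n hn i => ?_)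
  have h1 := happrox p (by omega) n hn i
  have h2 := hpz i
  have h3 : 1 / ((p : ℝ) + 2) ≤ ε / 2 := by
    have h4 : (N : ℝ) + 1 ≤ p := by exact_mod_cast hp
    rw [div_lt_iff₀ hε] at hN
    rw [div_le_iff₀ (by positivity)]
    nlinarith
  have h5 := abs_sub_le ((Tshift I w)^[n] x i) (y p i) (z i)
  linarith

/-- characterization of frequently hypercyclic weighted backward shifts
`T[(x_i)_{i∈I}] = (w_i x_{i+1})_{i∈I}` on `c₀(I)` for a countably infinite `I ⊆ ℝ`
with `I + ℤ ⊆ I`. -/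
theorem weightedShift_freqHypercyclic_iff
    (I : Set ℝ) (hIc : I.Countable) (hIinf : I.Infinite)
    (hIZ : ∀ i ∈ I, ∀ k : ℤ, i + (k : ℝ) ∈ I)
    (W : ℕ → Set ℝ) (hWfin : ∀ p, (W p).Finite) (hWmono : Monotone W)
    (hWsub : ∀ p, W p ⊆ I) (hWunion : (⋃ p, W p) = I)
    (w : ℝ → ℝ)
    (hinf : ∃ c : ℝ, 0 < c ∧ ∀ i ∈ I, c ≤ w i)
    (hsup : ∃ C : ℝ, ∀ i ∈ I, w i ≤ C) :
    (FHshift I w ↔ ∃ M : ℕ → ℝ, GoodM M ∧ ∃ E : ℕ → Set ℕ, Cond1 w W M E) ∧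
    ((∃ M : ℕ → ℝ, GoodM M ∧ ∃ E : ℕ → Set ℕ, Cond1 w W M E) ↔
      ∀ M : ℕ → ℝ, GoodM M → ∃ E : ℕ → Set ℕ, Cond1 w W M E) := by
  obtain ⟨c, hc, hcw⟩ := hinf
  obtain ⟨C, hCw⟩ := hsup
  have hD1 : (1 : ℝ) ≤ max 1 (max C c⁻¹) := le_max_left _ _
  have hDinv : (max 1 (max C c⁻¹))⁻¹ ≤ c :=
    inv_le_of_inv_le₀ hc ((le_max_right _ _).trans (le_max_right _ _))
  have hnec : FHshift I w → ∃ M : ℕ → ℝ, GoodM M ∧ ∃ E : ℕ → Set ℕ, Cond1 w W M E :=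
    cond_of_FHshift I hIc hIinf hIZ W hWfin hWsub w hD1 (fun i hi => hDinv.trans (hcw i hi))
      (fun i hi => (hCw i hi).trans ((le_max_left _ _).trans (le_max_right _ _)))
  refine ⟨⟨hnec, ?_⟩, ?_, ?_⟩
  · rintro ⟨M, hM, E, hE⟩
    exact FHshift_of_cond I hIc hIinf hIZ W hWfin hWmono hWsub hWunion w hc hcw hM hE
  · rintro ⟨M, hM, E, hE⟩ M' hM'
    obtain ⟨E', hE', -⟩ := exists_cond_of_cond I hIinf W hWmono hWunion w hM hE hM'.1
    exact ⟨E', hE'⟩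
  · intro h
    have hgood : GoodM fun p => (p : ℝ) + 1 := ⟨fun p => by positivity,
      tendsto_atTop_add_const_right _ _ tendsto_natCast_atTop_atTop⟩
    exact ⟨_, hgood, h _ hgood⟩
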